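/- Let α > 0. Let R: ℝ² → ℂ be a continuous integrable function whose two-dimensional Fourier transform R̂₂(z, w) := ∫_ℝ ∫_ℝ e^{−izu} e^{−iwv} R(u, v) du dv is integrable on ℝ², for which the inversion formula R(u, v) = (1/(2π)²) ∫_ℝ ∫_ℝ e^{izu} e^{iwv} R̂₂(z, w) dz dw holds for all (u, v), and which satisfies ∫_ℝ ∫_ℝ |R̂₂(z, w)| |z|^α |w|^α dz dw < ∞. Let ψ: ℝ → ℂ be integrable with ψ̂(0) = 0, and suppose ψ̂ is Hölder (Lipschitz of order α): there is L > 0 such that |ψ̂(y) − ψ̂(y′)| ≤ L |y − y′|^α for all y, y′ ∈ ℝ. For j ∈ ℕ₀, k ∈ ℤ set ψ_{jk}(x) := 2^{j/2} ψ(2^j x − k). Then for every j ∈ ℕ₀ and k ∈ ℤ, | ∫_ℝ ∫_ℝ R(u, v) conj(ψ_{jk}(u)) ψ_{jk}(v) du dv | ≤ (L² / ((2π)² · 2^{j(1+2α)})) ∫_ℝ ∫_ℝ |R̂₂(z, w)| |z|^α |w|^α dz dw; in particular this bound is uniform in k and decays geometrically in j. -/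

import Mathlib

open MeasureTheory Complex

/-- The Fourier transform `ĝ(y) = ∫_ℝ e^{-iyx} g(x) dx`. -/
noncomputable def ft (g : ℝ → ℂ) (y : ℝ) : ℂ :=
  ∫ x : ℝ, Complex.exp (-(Complex.I * y * x)) * g x

/-- The two-dimensional Fourier transform
`R̂₂(z,w) = ∫∫ e^{−izu} e^{−iwv} R(u,v) du dv`. -/
noncomputable def ft2 (R : ℝ → ℝ → ℂ) (z w : ℝ) : ℂ :=
  ∫ u : ℝ, ∫ v : ℝ,
    Complex.exp (-(Complex.I * z * u)) * Complex.exp (-(Complex.I * w * v)) * R u v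

/-- The dilated-translated wavelet `ψ_{jk}(x) = 2^{j/2} ψ(2^j x − k)`. -/
noncomputable def wav (ψ : ℝ → ℂ) (j : ℕ) (k : ℤ) (x : ℝ) : ℂ :=
  (((2 : ℝ) ^ ((j : ℝ) / 2) : ℝ) : ℂ) * ψ ((2 : ℝ) ^ j * x - k)

/-!
Fubini turns the quadratic form of a Fourier–Stieltjes kernel into an integral in frequency:
`∫∫ R(u,v) f(u) g(v) du dv = ∫ G(z,w) f̂(-z) ĝ(-w) dν(z,w)`.
For `f = conj ψ_{jk}` and `g = ψ_{jk}` the translation `k` only contributes a phase, while the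
dilation gives `|ψ̂_{jk}(y)| = 2^{-j/2} |ψ̂(y / 2^j)| ≤ L 2^{-j(1/2+α)} |y|^α` by
comparing `ψ̂` with `ψ̂(0) = 0`. The square of the constant is the decay rate in `j`.
-/

/-- The plane wave `e^{i(zu + wv)}` of frequency `p = (z, w)` at the point `q = (u, v)`, split into
two exponentials as in `ft2`. -/
noncomputable def planeWave (p q : ℝ × ℝ) : ℂ :=
  exp (I * p.1 * q.1) * exp (I * p.2 * q.2)

/-- The unnormalized inverse Fourier transform of the complex measure `G dν`. Covariances of this
form are those of harmonizable processes; `ν = volume` is the case of a spectral density. -/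
noncomputable def fourierStieltjes (ν : Measure (ℝ × ℝ)) (G : ℝ × ℝ → ℂ) (q : ℝ × ℝ) : ℂ :=
  ∫ p, planeWave p q * G p ∂ν

lemma norm_planeWave (p q : ℝ × ℝ) : ‖planeWave p q‖ = 1 := by
  simp [planeWave, norm_exp]

lemma continuous_planeWave : Continuous (Function.uncurry planeWave) := by
  unfold planeWave Function.uncurry
  fun_prop

lemma integral_planeWave_mul (f g : ℝ → ℂ) (p : ℝ × ℝ) :
    ∫ q : ℝ × ℝ, planeWave p q * (f q.1 * g q.2) = ft f (-p.1) * ft g (-p.2) := by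
  have ft_neg (h : ℝ → ℂ) (y : ℝ) : ft h (-y) = ∫ x : ℝ, exp (I * y * x) * h x := by
    simp only [ft, ofReal_neg, mul_neg, neg_mul, neg_neg]
  rw [ft_neg, ft_neg, ← integral_prod_mul, ← Measure.volume_eq_prod]
  simp only [planeWave, mul_mul_mul_comm]

lemma ft_conj (g : ℝ → ℂ) (y : ℝ) :
    ft (fun x => starRingEnd ℂ (g x)) y = starRingEnd ℂ (ft g (-y)) := by
  simp only [ft, ← integral_conj, map_mul, ← exp_conj, conj_I, conj_ofReal, ofReal_neg,
    neg_mul, mul_neg, neg_neg]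

lemma ft_const_mul (c : ℂ) (g : ℝ → ℂ) (y : ℝ) : ft (fun x => c * g x) y = c * ft g y := by
  simp only [ft, mul_left_comm _ c, integral_const_mul]

lemma ft_comp_mul_sub {a : ℝ} (ha : a ≠ 0) (b : ℝ) (g : ℝ → ℂ) (y : ℝ) :
    ft (fun x => g (a * x - b)) y =
      |a⁻¹| * (exp (-(I * (y / a : ℝ) * b)) * ft g (y / a)) := by
  let h : ℝ → ℂ := fun t => exp (-(I * (y / a : ℝ) * b)) * (exp (-(I * (y / a : ℝ) * t)) * g t)
  have split_phase (x : ℝ) : exp (-(I * y * x)) * g (a * x - b) = h (a * x - b) := by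
    have ha' : (a : ℂ) ≠ 0 := ofReal_ne_zero.2 ha
    simp only [h, ← mul_assoc, ← exp_add]
    congr 2
    push_cast
    field_simp
    ring
  calc ft (fun x => g (a * x - b)) y
      = ∫ x : ℝ, h (a * x - b) := integral_congr_ae (.of_forall split_phase)
    _ = |a⁻¹| • ∫ t : ℝ, h (t - b) := Measure.integral_comp_mul_left (fun t => h (t - b)) a
    _ = |a⁻¹| • ∫ t : ℝ, h t := by rw [integral_sub_right_eq_self h]
    _ = |a⁻¹| * (exp (-(I * (y / a : ℝ) * b)) * ft g (y / a)) := by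
      rw [real_smul, integral_const_mul, ft]

section FourierStieltjes

variable {ν : Measure (ℝ × ℝ)} {G : ℝ × ℝ → ℂ}

lemma integrable_planeWave_mul (hG : Integrable G ν) (q : ℝ × ℝ) :
    Integrable (fun p => planeWave p q * G p) ν :=
  hG.bdd_mul (c := 1)
    (continuous_planeWave.comp (Continuous.prodMk_left q)).aestronglyMeasurable
    (.of_forall fun p => (norm_planeWave p q).le)

lemma fourierStieltjes_volume (hG : Integrable G) (u v : ℝ) :
    fourierStieltjes volume G (u, v) =
      ∫ z : ℝ, ∫ w : ℝ, exp (I * z * u) * exp (I * w * v) * G (z, w) :=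
  integral_prod _ (integrable_planeWave_mul hG (u, v))

variable {f g : ℝ → ℂ}

lemma integrable_planeWave_mul_mul (hG : Integrable G ν) (hf : Integrable f) (hg : Integrable g) :
    Integrable (fun x : (ℝ × ℝ) × (ℝ × ℝ) =>
      planeWave x.1 x.2 * (G x.1 * (f x.2.1 * g x.2.2))) (ν.prod volume) :=
  (hG.mul_prod (hf.mul_prod hg)).bdd_mul (c := 1) continuous_planeWave.aestronglyMeasurable
    (.of_forall fun x => (norm_planeWave x.1 x.2).le)

variable [SFinite ν]

lemma integral_fourierStieltjes_mul (hG : Integrable G ν) (hf : Integrable f) (hg : Integrable g) :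
    ∫ u : ℝ, ∫ v : ℝ, fourierStieltjes ν G (u, v) * (f u * g v) =
      ∫ p, G p * (ft f (-p.1) * ft g (-p.2)) ∂ν := by
  let K (p q : ℝ × ℝ) : ℂ := planeWave p q * (G p * (f q.1 * g q.2))
  have hK : Integrable (Function.uncurry K) (ν.prod volume) := integrable_planeWave_mul_mul hG hf hg
  have integral_frequency (q : ℝ × ℝ) :
      ∫ p, K p q ∂ν = fourierStieltjes ν G q * (f q.1 * g q.2) := by
    simp only [K, fourierStieltjes, ← integral_mul_const, mul_assoc]
  have integral_space (p : ℝ × ℝ) : ∫ q, K p q = G p * (ft f (-p.1) * ft g (-p.2)) := by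
    simp only [K, mul_left_comm _ (G p), integral_const_mul, integral_planeWave_mul]
  calc ∫ u : ℝ, ∫ v : ℝ, fourierStieltjes ν G (u, v) * (f u * g v)
      = ∫ u : ℝ, ∫ v : ℝ, ∫ p, K p (u, v) ∂ν := by simp only [integral_frequency]
    _ = ∫ q, ∫ p, K p q ∂ν := (integral_prod _ hK.integral_prod_right).symm
    _ = ∫ p, (∫ q, K p q) ∂ν := (integral_integral_swap hK).symm
    _ = ∫ p, G p * (ft f (-p.1) * ft g (-p.2)) ∂ν := by simp only [integral_space]

lemma norm_integral_fourierStieltjes_mul_le {α β A B : ℝ}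
    (hG : Integrable G ν) (hf : Integrable f) (hg : Integrable g)
    (hGαβ : Integrable (fun p => ‖G p‖ * |p.1| ^ α * |p.2| ^ β) ν)
    (hfA : ∀ y, ‖ft f y‖ ≤ A * |y| ^ α) (hgB : ∀ y, ‖ft g y‖ ≤ B * |y| ^ β) :
    ‖∫ u : ℝ, ∫ v : ℝ, fourierStieltjes ν G (u, v) * (f u * g v)‖ ≤
      A * B * ∫ p, ‖G p‖ * |p.1| ^ α * |p.2| ^ β ∂ν := by
  rw [integral_fourierStieltjes_mul hG hf hg, ← integral_const_mul]
  refine norm_integral_le_of_norm_le (hGαβ.const_mul _) (.of_forall fun p => ?_)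
  have hfp : ‖ft f (-p.1)‖ ≤ A * |p.1| ^ α := abs_neg p.1 ▸ hfA (-p.1)
  have hgp : ‖ft g (-p.2)‖ ≤ B * |p.2| ^ β := abs_neg p.2 ▸ hgB (-p.2)
  calc ‖G p * (ft f (-p.1) * ft g (-p.2))‖
      = ‖G p‖ * (‖ft f (-p.1)‖ * ‖ft g (-p.2)‖) := by rw [norm_mul, norm_mul]
    _ ≤ ‖G p‖ * ((A * |p.1| ^ α) * (B * |p.2| ^ β)) := by
      gcongr
      exact (norm_nonneg _).trans hfp
    _ = A * B * (‖G p‖ * |p.1| ^ α * |p.2| ^ β) := by ring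

end FourierStieltjes

lemma integrable_wav {ψ : ℝ → ℂ} (hψ : Integrable ψ) (j : ℕ) (k : ℤ) :
    Integrable (wav ψ j k) :=
  ((hψ.comp_sub_right (k : ℝ)).comp_mul_left' (by positivity)).const_mul _

lemma ft_wav (ψ : ℝ → ℂ) (j : ℕ) (k : ℤ) (y : ℝ) :
    ft (wav ψ j k) y =
      ((2 : ℝ) ^ (-((j : ℝ) / 2)) : ℝ) * (exp (-(I * (y / 2 ^ j : ℝ) * k)) * ft ψ (y / 2 ^ j)) := by
  have scale : (2 : ℝ) ^ ((j : ℝ) / 2) * |((2 : ℝ) ^ j)⁻¹| = (2 : ℝ) ^ (-((j : ℝ) / 2)) := by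
    rw [abs_of_pos (by positivity), ← Real.rpow_natCast, ← Real.rpow_neg two_pos.le,
      ← Real.rpow_add two_pos]
    ring_nf
  have dilation := ft_comp_mul_sub (a := 2 ^ j) (by positivity) k ψ y
  unfold wav
  rw [ft_const_mul, dilation, ← mul_assoc, ← ofReal_mul, scale, ofReal_intCast]

lemma norm_ft_wav (ψ : ℝ → ℂ) (j : ℕ) (k : ℤ) (y : ℝ) :
    ‖ft (wav ψ j k) y‖ = (2 : ℝ) ^ (-((j : ℝ) / 2)) * ‖ft ψ (y / 2 ^ j)‖ := by
  have phase : ‖exp (-(I * (y / 2 ^ j : ℝ) * k))‖ = 1 := by simp [norm_exp, -ofReal_div]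
  rw [ft_wav, norm_mul, norm_mul, phase, one_mul, norm_real, Real.norm_of_nonneg (by positivity)]

lemma norm_ft_wav_le {ψ : ℝ → ℂ} {α L : ℝ} (hψ : ∀ y, ‖ft ψ y‖ ≤ L * |y| ^ α)
    (j : ℕ) (k : ℤ) (y : ℝ) :
    ‖ft (wav ψ j k) y‖ ≤ L * (2 : ℝ) ^ (-((j : ℝ) * (1 / 2 + α))) * |y| ^ α := by
  have scale : |y / 2 ^ j| ^ α = |y| ^ α * (2 : ℝ) ^ (-((j : ℝ) * α)) := by
    rw [abs_div, abs_of_pos (by positivity : (0 : ℝ) < 2 ^ j), Real.div_rpow (abs_nonneg _)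
      (by positivity), ← Real.rpow_natCast, ← Real.rpow_mul two_pos.le, div_eq_mul_inv,
      ← Real.rpow_neg two_pos.le]
  calc ‖ft (wav ψ j k) y‖
      = (2 : ℝ) ^ (-((j : ℝ) / 2)) * ‖ft ψ (y / 2 ^ j)‖ := norm_ft_wav ψ j k y
    _ ≤ (2 : ℝ) ^ (-((j : ℝ) / 2)) * (L * (|y| ^ α * (2 : ℝ) ^ (-((j : ℝ) * α)))) := by
      rw [← scale]
      gcongr
      exact hψ _
    _ = L * ((2 : ℝ) ^ (-((j : ℝ) / 2)) * (2 : ℝ) ^ (-((j : ℝ) * α))) * |y| ^ α := by ring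
    _ = L * (2 : ℝ) ^ (-((j : ℝ) * (1 / 2 + α))) * |y| ^ α := by
      rw [← Real.rpow_add two_pos]
      ring_nf

theorem stmt_12_general (α : ℝ) (ν : Measure (ℝ × ℝ)) [SFinite ν]
    (R : ℝ → ℝ → ℂ) (G : ℝ × ℝ → ℂ) (hG : Integrable G ν)
    (hR : ∀ u v : ℝ, R u v = ((1 / (2 * Real.pi)) ^ 2 : ℝ) * fourierStieltjes ν G (u, v))
    (hGα : Integrable (fun p : ℝ × ℝ => ‖G p‖ * |p.1| ^ α * |p.2| ^ α) ν)
    (ψ : ℝ → ℂ) (hψ : Integrable ψ) (L : ℝ) (hψL : ∀ y, ‖ft ψ y‖ ≤ L * |y| ^ α)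
    (j : ℕ) (k : ℤ) :
    ‖∫ u : ℝ, ∫ v : ℝ, R u v * (starRingEnd ℂ) (wav ψ j k u) * wav ψ j k v‖ ≤
      (L ^ 2 / ((2 * Real.pi) ^ 2 * (2 : ℝ) ^ ((j : ℝ) * (1 + 2 * α)))) *
        ∫ p, ‖G p‖ * |p.1| ^ α * |p.2| ^ α ∂ν := by
  set d : ℝ := (2 : ℝ) ^ (-((j : ℝ) * (1 / 2 + α))) with hd
  have hdd : (2 : ℝ) ^ ((j : ℝ) * (1 + 2 * α)) = (d * d)⁻¹ := by
    rw [hd, ← Real.rpow_add two_pos, ← Real.rpow_neg two_pos.le]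
    ring_nf
  have hwav := integrable_wav hψ j k
  have hwavL : ∀ y, ‖ft (wav ψ j k) y‖ ≤ L * d * |y| ^ α := norm_ft_wav_le hψL j k
  have hconj : Integrable (fun u => starRingEnd ℂ (wav ψ j k u)) :=
    conjLIE.integrable_comp_iff.2 hwav
  have hconjL (y : ℝ) : ‖ft (fun u => starRingEnd ℂ (wav ψ j k u)) y‖ ≤ L * d * |y| ^ α := by
    rw [ft_conj, RCLike.norm_conj, ← abs_neg y]
    exact hwavL (-y)
  calc ‖∫ u : ℝ, ∫ v : ℝ, R u v * (starRingEnd ℂ) (wav ψ j k u) * wav ψ j k v‖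
      = (1 / (2 * Real.pi)) ^ 2 * ‖∫ u : ℝ, ∫ v : ℝ,
          fourierStieltjes ν G (u, v) * ((starRingEnd ℂ) (wav ψ j k u) * wav ψ j k v)‖ := by
        simp only [hR, mul_assoc, integral_const_mul]
        rw [norm_mul, norm_real, Real.norm_of_nonneg (by positivity)]
    _ ≤ (1 / (2 * Real.pi)) ^ 2 *
          (L * d * (L * d) * ∫ p, ‖G p‖ * |p.1| ^ α * |p.2| ^ α ∂ν) := by
        gcongr
        exact norm_integral_fourierStieltjes_mul_le hG hconj hwav hGα hconjL hwavL
    _ = _ := by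
        rw [hdd]
        field_simp

/-- Nonstationary uniform-in-`k`, geometrically decaying in `j` bound:
`|∫∫ R(u,v) conj(ψ_{jk}(u)) ψ_{jk}(v) du dv|
  ≤ (L²/((2π)² 2^{j(1+2α)})) ∫∫ |R̂₂(z,w)| |z|^α |w|^α dz dw`. -/
theorem stmt_12 (α : ℝ) (hα : 0 < α)
    (R : ℝ → ℝ → ℂ)
    (hRcont : Continuous (Function.uncurry R))
    (hRint : Integrable (Function.uncurry R))
    (hRhatint : Integrable (fun p : ℝ × ℝ => ft2 R p.1 p.2))
    (hRinv : ∀ u v : ℝ, R u v =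
      ((1 / (2 * Real.pi)) ^ 2 : ℝ) *
        ∫ z : ℝ, ∫ w : ℝ,
          Complex.exp (Complex.I * z * u) * Complex.exp (Complex.I * w * v) * ft2 R z w)
    (hRhatα : Integrable (fun p : ℝ × ℝ => ‖ft2 R p.1 p.2‖ * |p.1| ^ α * |p.2| ^ α))
    (ψ : ℝ → ℂ) (hψint : Integrable ψ) (hψ0 : ft ψ 0 = 0)
    (L : ℝ) (hL : 0 < L)
    (hHolder : ∀ y y' : ℝ, ‖ft ψ y - ft ψ y'‖ ≤ L * |y - y'| ^ α) :
    ∀ (j : ℕ) (k : ℤ),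
      ‖∫ u : ℝ, ∫ v : ℝ,
          R u v * (starRingEnd ℂ) (wav ψ j k u) * wav ψ j k v‖ ≤
        (L ^ 2 / ((2 * Real.pi) ^ 2 * (2 : ℝ) ^ ((j : ℝ) * (1 + 2 * α)))) *
          ∫ z : ℝ, ∫ w : ℝ, ‖ft2 R z w‖ * |z| ^ α * |w| ^ α := by
  intro j k
  exact (stmt_12_general α volume R (fun p => ft2 R p.1 p.2) hRhatint
    (fun u v => by rw [fourierStieltjes_volume hRhatint, hRinv]) hRhatα ψ hψint L
    (fun y => by simpa only [hψ0, sub_zero] using hHolder y 0) j k).trans_eq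
    (congrArg _ (integral_prod _ hRhatα))
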